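/- For all β ≥ 0, c ≥ 0 and N₁, N₂ ∈ ℕ, the quenched pressure is superadditive: p_{N₁+N₂}(β,c) ≥ (N₁/(N₁+N₂)) p_{N₁}(β,c) + (N₂/(N₁+N₂)) p_{N₂}(β,c). -/

import Mathlib

open MeasureTheory Filter

/-- Poisson probability mass function with parameter `lam`. -/
noncomputable def poissonPMF (lam : ℝ) (k : ℕ) : ℝ :=
  Real.exp (-lam) * lam ^ k / (Nat.factorial k)

/-- Potts Hamiltonian `H_N(σ, J) = Σ_{i,j} J_{ij} δ(σ_i, σ_j)`. -/
noncomputable def potts.H (q N : ℕ) (σ : Fin N → Fin q) (J : Fin N → Fin N → ℝ) : ℝ :=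
  ∑ i, ∑ j, J i j * (if σ i = σ j then (1 : ℝ) else 0)

/-- Partition function `Z_N(J)`. -/
noncomputable def potts.Z (q N : ℕ) (J : Fin N → Fin N → ℝ) : ℝ :=
  ∑ σ : Fin N → Fin q, Real.exp (- potts.H q N σ J)

/-- Expectation over the Poissonian disorder: the entries `J_{ij}` are independent
Poisson random variables with means `c_{ij} / (2N)`. -/
noncomputable def potts.E (N : ℕ) (c : Fin N → Fin N → ℝ)
    (g : (Fin N → Fin N → ℕ) → ℝ) : ℝ :=
  ∑' J : Fin N → Fin N → ℕ,
    (∏ i, ∏ j, poissonPMF (c i j / (2 * N)) (J i j)) * g J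

/-- Quenched pressure for a general nonnegative connectivity matrix `c`. -/
noncomputable def potts.pmat (q N : ℕ) (β : ℝ) (c : Fin N → Fin N → ℝ) : ℝ :=
  potts.E N c (fun J => (1 / N) * Real.log (potts.Z q N (fun i j => β * (J i j : ℝ))))

/-- Quenched pressure for the constant connectivity matrix `c_{ij} ≡ c`. -/
noncomputable def potts.p (q N : ℕ) (β c : ℝ) : ℝ :=
  potts.pmat q N β (fun _ _ => c)

/-- Annealed pressure `𝒫(β, c) = ln q + (c/2) ln(1 - (1 - e^{-β})/q)`. -/
noncomputable def potts.annealed (q : ℕ) (β c : ℝ) : ℝ :=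
  Real.log q + (c / 2) * Real.log (1 - (1 - Real.exp (-β)) / q)

/-!
Let `r` be the edge rates of two non-interacting systems of sizes `N₁`, `N₂`, and `s` the constant
rates of the joint system. Both have the same total, and `r - s` is a positive multiple of `u uᵀ`
with `u = (1 / N₁, …, 1 / N₁, -1 / N₂, …, -1 / N₂)`.

The total number of edges is Poisson with the same mean in both cases, and conditionally on its
value `k` the edges are drawn one by one: the conditional expectation of `g` is proportional to
`T ^ k g` at `0`, where `T g n = ∑ e, rate e * g (n + δ e)`. The operators `T` are monotone and
commute, so it suffices to compare `T g` for the two rates, that is, the effect of one extra edge.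

For `g = log Z`, an edge `(i, j)` changes `g` by `log (1 - (1 - exp (-β)) * x i j)`, where `x i j`
is the Gibbs probability that the spins at `i` and `j` agree. The matrix `x` is positive
semidefinite, hence, by the Schur product theorem and the power series of `-log (1 - ·)`, so is the
entrywise `-log (1 - (1 - exp (-β)) * x)`, and pairing it with `r - s` gives the required sign.
-/

open ProbabilityTheory (poissonMeasure)
open scoped NNReal

section PoissonFamily

variable {ι κ : Type*} [Fintype ι] [Fintype κ]

/-- The law of a family of independent Poisson random variables with rates `r i`. -/
noncomputable def poissonPi (r : ι → ℝ≥0) : Measure (ι → ℕ) :=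
  Measure.pi fun i => poissonMeasure (r i)

instance isProbabilityMeasure_poissonPi (r : ι → ℝ≥0) : IsProbabilityMeasure (poissonPi r) := by
  unfold poissonPi
  infer_instance

lemma poissonPi_real_singleton (r : ι → ℝ≥0) (n : ι → ℕ) :
    (poissonPi r).real {n} = ∏ i, poissonPMF (r i) (n i) := by
  rw [poissonPi, measureReal_def, Measure.pi_singleton, ENNReal.toReal_prod]
  exact Finset.prod_congr rfl fun i _ => ProbabilityTheory.poissonMeasure_real_singleton _ _

lemma poissonPi_real_singleton_zero (r : ι → ℝ≥0) :
    (poissonPi r).real {0} = Real.exp (-∑ i, (r i : ℝ)) := by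
  simp [poissonPi_real_singleton, poissonPMF, Real.exp_sum, ← Finset.sum_neg_distrib]

lemma integrable_natCast_poissonMeasure (r : ℝ≥0) :
    Integrable (fun k : ℕ => (k : ℝ)) (poissonMeasure r) := by
  rw [ProbabilityTheory.integrable_poissonMeasure_iff]
  refine ((Real.summable_pow_div_factorial (2 * r)).mul_left (Real.exp (-r))).of_nonneg_of_le
    (fun k => by positivity) fun k => ?_
  have natCast_le_two_pow : (k : ℝ) ≤ 2 ^ k := by exact_mod_cast Nat.lt_two_pow_self.le
  calc Real.exp (-r) * r ^ k / k.factorial * ‖(k : ℝ)‖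
      ≤ Real.exp (-r) * r ^ k / k.factorial * 2 ^ k := by
        rw [Real.norm_natCast]
        gcongr
    _ = Real.exp (-r) * ((2 * r) ^ k / k.factorial) := by ring

lemma integrable_eval_poissonPi (r : ι → ℝ≥0) (i : ι) :
    Integrable (fun n : ι → ℕ => (n i : ℝ)) (poissonPi r) :=
  integrable_comp_eval (μ := fun i => poissonMeasure (r i))
    (integrable_natCast_poissonMeasure (r i))

lemma ae_poissonPi_eq_zero_of_rate_eq_zero (r : ι → ℝ≥0) :
    ∀ᵐ n ∂poissonPi r, ∀ i, r i = 0 → n i = 0 := by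
  rw [ae_iff_of_countable]
  intro n hn i hri
  by_contra hni
  refine hn ((measureReal_eq_zero_iff).1 ?_)
  rw [poissonPi_real_singleton]
  exact Finset.prod_eq_zero (Finset.mem_univ i) (by simp [poissonPMF, hri, hni])

lemma measurePreserving_comp_poissonPi (r : ι → ℝ≥0) {e : κ → ι} (he : e.Injective) :
    MeasurePreserving (fun (n : ι → ℕ) k => n (e k)) (poissonPi r)
      (poissonPi fun k => r (e k)) where
  measurable := measurable_of_countable _
  map_eq := by
    have indep := (ProbabilityTheory.iIndepFun_pi (μ := fun i => poissonMeasure (r i))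
      fun _ => aemeasurable_id).precomp he
    refine (indep.map_fun_eq_pi_map fun _ => (measurable_of_countable _).aemeasurable).trans ?_
    exact congrArg Measure.pi (funext fun k => (measurePreserving_eval _ (e k)).map_eq)

variable [DecidableEq ι]

/-- The operator `g ↦ ∑ i, r i • g (· + δ i)` on functions of an occupation vector: add one unit
at a site drawn with weights `r`. -/
noncomputable def weightedShift (r : ι → ℝ≥0) (g : (ι → ℕ) → ℝ) : (ι → ℕ) → ℝ :=
  fun n => ∑ i, r i * g (n + Pi.single i 1)

lemma monotone_weightedShift (r : ι → ℝ≥0) : Monotone (weightedShift r) := fun _ _ hgh _ =>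
  Finset.sum_le_sum fun i _ => mul_le_mul_of_nonneg_left (hgh _) (r i).coe_nonneg

lemma commute_weightedShift (r s : ι → ℝ≥0) :
    Function.Commute (weightedShift r) (weightedShift s) := by
  intro g
  ext n
  simp only [weightedShift, Finset.mul_sum]
  rw [Finset.sum_comm]
  refine Finset.sum_congr rfl fun j _ => Finset.sum_congr rfl fun i _ => ?_
  rw [mul_left_comm, add_right_comm]

lemma mul_poissonPi_real_singleton_add_single (r : ι → ℝ≥0) (n : ι → ℕ) (i : ι) :
    (n i + 1) * (poissonPi r).real {n + Pi.single i 1} = r i * (poissonPi r).real {n} := by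
  have poissonPMF_succ : (n i + 1) * poissonPMF (r i) (n i + 1) = r i * poissonPMF (r i) (n i) := by
    simp only [poissonPMF, Nat.factorial_succ, Nat.cast_mul, Nat.cast_succ, pow_succ']
    field_simp
  simp only [poissonPi_real_singleton, ← Finset.mul_prod_erase _ _ (Finset.mem_univ i)]
  rw [Pi.add_apply, Pi.single_eq_same, ← mul_assoc, ← mul_assoc, poissonPMF_succ]
  congr 1
  refine Finset.prod_congr rfl fun j hj => ?_
  rw [Pi.add_apply, Pi.single_eq_of_ne (Finset.ne_of_mem_erase hj), add_zero]

-- The Mecke equation of the Poisson law, restricted to vectors with a prescribed total.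
lemma sum_piAntidiag_mul_shift (r : ι → ℝ≥0) (g : (ι → ℕ) → ℝ) (k : ℕ) (i : ι) :
    ∑ n ∈ Finset.piAntidiag Finset.univ k,
        (poissonPi r).real {n} * (r i * g (n + Pi.single i 1)) =
      ∑ n ∈ Finset.piAntidiag Finset.univ (k + 1), (poissonPi r).real {n} * (n i * g n) := by
  refine Finset.sum_of_injOn (· + Pi.single i 1) (add_left_injective _).injOn
    (fun n hn => ?_) (fun n hn hne => ?_) fun n _ => ?_
  · simp_all [Finset.sum_add_distrib]
  · suffices n i = 0 by simp [this]
    by_contra hni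
    have single_le : Pi.single i 1 ≤ n :=
      update_le_iff.2 ⟨Nat.one_le_iff_ne_zero.2 hni, fun _ _ => Nat.zero_le _⟩
    refine hne ⟨n - Pi.single i 1, ?_, tsub_add_cancel_of_le single_le⟩
    have total_eq := congrArg (∑ j, · j) (tsub_add_cancel_of_le single_le)
    simp_all [Finset.sum_add_distrib]
  · simp only [Pi.add_apply, Pi.single_eq_same, Nat.cast_add, Nat.cast_one]
    linear_combination
      (-g (n + Pi.single i 1)) * mul_poissonPi_real_singleton_add_single r n i

lemma sum_piAntidiag_weightedShift (r : ι → ℝ≥0) (g : (ι → ℕ) → ℝ) (k : ℕ) :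
    ∑ n ∈ Finset.piAntidiag Finset.univ k, (poissonPi r).real {n} * weightedShift r g n =
      (k + 1) * ∑ n ∈ Finset.piAntidiag Finset.univ (k + 1), (poissonPi r).real {n} * g n := by
  simp only [weightedShift, Finset.mul_sum]
  rw [Finset.sum_comm]
  simp only [sum_piAntidiag_mul_shift]
  rw [Finset.sum_comm]
  refine Finset.sum_congr rfl fun n hn => ?_
  have total : ∑ i, (n i : ℝ) = k + 1 := by
    exact_mod_cast (Finset.mem_piAntidiag.1 hn).1
  rw [← Finset.mul_sum, ← Finset.sum_mul, total, mul_left_comm]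

lemma sum_piAntidiag_poissonPi (r : ι → ℝ≥0) (g : (ι → ℕ) → ℝ) (k : ℕ) :
    ∑ n ∈ Finset.piAntidiag Finset.univ k, (poissonPi r).real {n} * g n =
      Real.exp (-∑ i, (r i : ℝ)) / k.factorial * (weightedShift r)^[k] g 0 := by
  induction k generalizing g with
  | zero => simp [poissonPi_real_singleton_zero]
  | succ k ih =>
    have step := sum_piAntidiag_weightedShift r g k
    rw [ih] at step
    rw [Function.iterate_succ_apply, Nat.factorial_succ]
    push_cast
    field_simp at step ⊢
    linarith

lemma hasSum_integral_poissonPi {r : ι → ℝ≥0} {g : (ι → ℕ) → ℝ}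
    (hg : Integrable g (poissonPi r)) :
    HasSum (fun k : ℕ => Real.exp (-∑ i, (r i : ℝ)) / k.factorial * (weightedShift r)^[k] g 0)
      (∫ n, g n ∂poissonPi r) := by
  let level (k : ℕ) : Finset (ι → ℕ) := Finset.piAntidiag Finset.univ k
  have iUnion_level : ⋃ k, (level k : Set (ι → ℕ)) = Set.univ := by
    ext n
    simp [level]
  have disjoint_level : Pairwise (Function.onFun Disjoint fun k => (level k : Set (ι → ℕ))) :=
    fun k l hkl => Set.disjoint_left.2 fun n hnk hnl => hkl <| by simp_all [level]
  have hasSum_level := hasSum_integral_iUnion (fun k => (level k).measurableSet) disjoint_level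
    hg.integrableOn
  rw [iUnion_level, setIntegral_univ] at hasSum_level
  refine hasSum_level.congr_fun fun k => ?_
  rw [setIntegral_finset _ hg.integrableOn]
  exact (sum_piAntidiag_poissonPi r g k).symm

theorem integral_poissonPi_le_of_weightedShift_le {r s : ι → ℝ≥0} {g : (ι → ℕ) → ℝ}
    (hr : Integrable g (poissonPi r)) (hs : Integrable g (poissonPi s))
    (hrs : ∑ i, (r i : ℝ) = ∑ i, (s i : ℝ)) (h : weightedShift r g ≤ weightedShift s g) :
    ∫ n, g n ∂poissonPi r ≤ ∫ n, g n ∂poissonPi s := by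
  refine hasSum_le (fun k => ?_) (hasSum_integral_poissonPi hr) (hasSum_integral_poissonPi hs)
  rw [hrs]
  gcongr
  exact (commute_weightedShift r s).iterate_le_of_map_le (monotone_weightedShift r)
    (monotone_weightedShift s) h k 0

end PoissonFamily

section EntrywiseFunctions

variable {n : Type*} {A : Matrix n n ℝ}

lemma posSemidef_of_hasSum {B : ℕ → Matrix n n ℝ} (hB : ∀ k, (B k).PosSemidef)
    (hA : ∀ i j, HasSum (fun k => B k i j) (A i j)) : A.PosSemidef := by
  refine ⟨Matrix.IsHermitian.ext fun i j => ?_, fun x => ?_⟩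
  · exact (hA j i).unique ((hA i j).congr_fun fun k => (hB k).isHermitian.apply i j)
  · exact (hasSum_sum fun i _ => hasSum_sum fun j _ =>
      ((hA i j).mul_left (star (x i))).mul_right (x j)).nonneg fun k => (hB k).2 x

lemma posSemidef_map_pow [Finite n] (hA : A.PosSemidef) (k : ℕ) : (A.map (· ^ k)).PosSemidef := by
  induction k with
  | zero =>
    have map_pow_zero : A.map (· ^ 0) = Matrix.vecMulVec 1 (star 1) := by
      ext i j
      simp [Matrix.vecMulVec_apply]
    exact map_pow_zero ▸ Matrix.posSemidef_vecMulVec_self_star 1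
  | succ k ih =>
    have map_pow_succ : A.map (· ^ (k + 1)) = (A.map (· ^ k)).hadamard A := by
      ext i j
      exact pow_succ _ _
    exact map_pow_succ ▸ ih.hadamard hA

lemma posSemidef_map_of_hasSum [Finite n] {a : ℕ → ℝ} {f : ℝ → ℝ} (hA : A.PosSemidef)
    (ha : ∀ k, 0 ≤ a k) (hf : ∀ i j, HasSum (fun k => a k * A i j ^ k) (f (A i j))) :
    (A.map f).PosSemidef :=
  posSemidef_of_hasSum (fun k => (posSemidef_map_pow hA k).smul (ha k)) hf

lemma posSemidef_neg_log_one_sub [Finite n] (hA : A.PosSemidef) (hA1 : ∀ i j, |A i j| < 1) :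
    (A.map fun x => -Real.log (1 - x)).PosSemidef := by
  refine posSemidef_map_of_hasSum (a := fun k => (k : ℝ)⁻¹) hA (fun k => by positivity)
    fun i j => ?_
  rw [← hasSum_nat_add_iff' 1]
  simpa [div_eq_inv_mul] using Real.hasSum_pow_div_log_of_abs_lt_one (hA1 i j)

lemma sum_mul_nonneg_of_posSemidef [Fintype n] {B : Matrix n n ℝ} (hA : A.PosSemidef)
    (hB : B.PosSemidef) : 0 ≤ ∑ i, ∑ j, A i j * B i j := by
  simpa [dotProduct, Matrix.mulVec] using (hA.hadamard hB).dotProduct_mulVec_nonneg 1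

end EntrywiseFunctions

namespace potts

variable {q N : ℕ}

section Gibbs

lemma H_add_single (σ : Fin N → Fin q) (J : Fin N → Fin N → ℝ) (i j : Fin N) (b : ℝ) :
    H q N σ (J + Pi.single i (Pi.single j b)) = H q N σ J + b * if σ i = σ j then 1 else 0 := by
  simp only [H, Pi.add_apply, add_mul, Finset.sum_add_distrib]
  congr 1
  rw [Fintype.sum_eq_single i (by simp +contextual), Fintype.sum_eq_single j (by simp +contextual),
    Pi.single_eq_same, Pi.single_eq_same]

lemma abs_H_le (σ : Fin N → Fin q) (J : Fin N → Fin N → ℝ) :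
    |H q N σ J| ≤ ∑ i, ∑ j, |J i j| := by
  refine (Finset.abs_sum_le_sum_abs _ _).trans (Finset.sum_le_sum fun i _ => ?_)
  refine (Finset.abs_sum_le_sum_abs _ _).trans (Finset.sum_le_sum fun j _ => ?_)
  split_ifs <;> simp

lemma Z_nonneg (J : Fin N → Fin N → ℝ) : 0 ≤ Z q N J :=
  Finset.sum_nonneg fun _ _ => (Real.exp_pos _).le

lemma Z_pos [NeZero q] (J : Fin N → Fin N → ℝ) : 0 < Z q N J :=
  Finset.sum_pos (fun _ _ => Real.exp_pos _) Finset.univ_nonempty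

lemma abs_log_Z_le [NeZero q] (J : Fin N → Fin N → ℝ) :
    |Real.log (Z q N J)| ≤ N * Real.log q + ∑ i, ∑ j, |J i j| := by
  set S := ∑ i, ∑ j, |J i j|
  have hq : (1 : ℝ) ≤ q := by exact_mod_cast NeZero.one_le
  have log_le : Real.log (Z q N J) ≤ N * Real.log q + S := by
    rw [← Real.log_pow, Real.log_le_iff_le_exp (Z_pos J), Real.exp_add,
      Real.exp_log (by positivity)]
    calc Z q N J ≤ ∑ _σ : Fin N → Fin q, Real.exp S :=
          Finset.sum_le_sum fun σ _ => Real.exp_le_exp.2 (neg_le.1 (abs_le.1 (abs_H_le σ J)).1)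
      _ = q ^ N * Real.exp S := by simp
  have le_log : -S ≤ Real.log (Z q N J) := by
    rw [Real.le_log_iff_exp_le (Z_pos J)]
    calc Real.exp (-S) ≤ Real.exp (-H q N 0 J) :=
          Real.exp_le_exp.2 (neg_le_neg (abs_le.1 (abs_H_le 0 J)).2)
      _ ≤ Z q N J := Finset.single_le_sum (f := fun σ => Real.exp (-H q N σ J))
          (fun _ _ => (Real.exp_pos _).le) (Finset.mem_univ 0)
  have log_q_nonneg : 0 ≤ N * Real.log q := mul_nonneg N.cast_nonneg (Real.log_nonneg hq)
  exact abs_le.2 ⟨by linarith, log_le⟩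

/-- The matrix of probabilities, under the Gibbs measure with weights `exp (-H σ J)`, that two
spins agree. -/
noncomputable def agreement (q N : ℕ) (J : Fin N → Fin N → ℝ) : Matrix (Fin N) (Fin N) ℝ :=
  .of fun i j => ∑ σ : Fin N → Fin q, Real.exp (-H q N σ J) / Z q N J * if σ i = σ j then 1 else 0

variable (J : Fin N → Fin N → ℝ) (i j : Fin N)

lemma agreement_nonneg : 0 ≤ agreement q N J i j :=
  Finset.sum_nonneg fun σ _ => mul_nonneg (div_nonneg (Real.exp_pos _).le (Z_nonneg J))
    (by positivity)

lemma agreement_le_one : agreement q N J i j ≤ 1 := by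
  calc agreement q N J i j ≤ ∑ σ : Fin N → Fin q, Real.exp (-H q N σ J) / Z q N J := by
        refine Finset.sum_le_sum fun σ _ => mul_le_of_le_one_right
          (div_nonneg (Real.exp_pos _).le (Z_nonneg J)) ?_
        split_ifs <;> norm_num
    _ = Z q N J / Z q N J := (Finset.sum_div _ _ _).symm
    _ ≤ 1 := div_self_le_one _

-- For a fixed `σ` the agreement matrix is the Gram matrix of the indicators of the colour classes.
lemma posSemidef_agreement : (agreement q N J).PosSemidef := by
  let colourClass (σ : Fin N → Fin q) (s : Fin q) (i : Fin N) : ℝ := if σ i = s then 1 else 0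
  have agreement_eq : agreement q N J = ∑ σ : Fin N → Fin q, (Real.exp (-H q N σ J) / Z q N J) •
      ∑ s, Matrix.vecMulVec (colourClass σ s) (star (colourClass σ s)) := by
    ext i j
    simp [agreement, Matrix.sum_apply, Matrix.vecMulVec_apply, colourClass, eq_comm]
  rw [agreement_eq]
  exact Matrix.posSemidef_sum _ fun σ _ => (Matrix.posSemidef_sum _ fun s _ =>
    Matrix.posSemidef_vecMulVec_self_star _).smul (div_nonneg (Real.exp_pos _).le (Z_nonneg J))

lemma Z_add_single [NeZero q] (b : ℝ) :
    Z q N (J + Pi.single i (Pi.single j b)) =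
      Z q N J * (1 - (1 - Real.exp (-b)) * agreement q N J i j) := by
  have weight_add_single (σ : Fin N → Fin q) :
      Real.exp (-H q N σ (J + Pi.single i (Pi.single j b))) = Real.exp (-H q N σ J) -
        (1 - Real.exp (-b)) * (Real.exp (-H q N σ J) * if σ i = σ j then 1 else 0) := by
    rw [H_add_single, neg_add, Real.exp_add]
    split_ifs
    · rw [mul_one, mul_one]
      ring
    · simp
  have Z_mul_agreement : Z q N J * agreement q N J i j =
      ∑ σ : Fin N → Fin q, Real.exp (-H q N σ J) * if σ i = σ j then 1 else 0 := by
    simp only [agreement, Matrix.of_apply, Finset.mul_sum, ← mul_assoc,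
      mul_div_cancel₀ _ (Z_pos J).ne']
  rw [mul_sub, mul_one, mul_left_comm, Z_mul_agreement, Finset.mul_sum, Z, Z,
    ← Finset.sum_sub_distrib]
  exact Finset.sum_congr rfl fun σ _ => weight_add_single σ

theorem sum_mul_log_Z_add_single_nonpos [NeZero q] {K : Matrix (Fin N) (Fin N) ℝ}
    (hK : K.PosSemidef) (hK0 : ∑ i, ∑ j, K i j = 0) {b : ℝ} (hb : 0 ≤ b) :
    ∑ i, ∑ j, K i j * Real.log (Z q N (J + Pi.single i (Pi.single j b))) ≤ 0 := by
  let A := (1 - Real.exp (-b)) • agreement q N J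
  have factor_nonneg : 0 ≤ 1 - Real.exp (-b) := by simpa using hb
  have A_nonneg i j : 0 ≤ A i j := mul_nonneg factor_nonneg (agreement_nonneg J i j)
  have A_lt_one i j : A i j < 1 :=
    (mul_le_of_le_one_right factor_nonneg (agreement_le_one J i j)).trans_lt
      (sub_lt_self _ (Real.exp_pos _))
  have log_eq i j : Real.log (Z q N (J + Pi.single i (Pi.single j b))) =
      Real.log (Z q N J) - -Real.log (1 - A i j) := by
    rw [Z_add_single, sub_neg_eq_add]
    exact Real.log_mul (Z_pos J).ne' (sub_pos.2 (A_lt_one i j)).ne'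
  have neg_log_posSemidef : (A.map fun x => -Real.log (1 - x)).PosSemidef :=
    posSemidef_neg_log_one_sub ((posSemidef_agreement J).smul factor_nonneg)
      fun i j => abs_lt.2 ⟨by linarith [A_nonneg i j], A_lt_one i j⟩
  calc ∑ i, ∑ j, K i j * Real.log (Z q N (J + Pi.single i (Pi.single j b)))
      = (∑ i, ∑ j, K i j) * Real.log (Z q N J) - ∑ i, ∑ j, K i j * -Real.log (1 - A i j) := by
        simp only [log_eq, mul_sub, Finset.sum_sub_distrib, Finset.sum_mul]
    _ ≤ 0 := by
        rw [hK0, zero_mul, zero_sub]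
        exact neg_nonpos.2 (sum_mul_nonneg_of_posSemidef hK neg_log_posSemidef)

end Gibbs

lemma Z_eq_mul_of_blocks_decoupled {N₁ N₂ : ℕ} (J : Fin (N₁ + N₂) → Fin (N₁ + N₂) → ℝ)
    (h₁₂ : ∀ i j, J (Fin.castAdd N₂ i) (Fin.natAdd N₁ j) = 0)
    (h₂₁ : ∀ i j, J (Fin.natAdd N₁ i) (Fin.castAdd N₂ j) = 0) :
    Z q (N₁ + N₂) J = Z q N₁ (fun i j => J (Fin.castAdd N₂ i) (Fin.castAdd N₂ j)) *
      Z q N₂ (fun i j => J (Fin.natAdd N₁ i) (Fin.natAdd N₁ j)) := by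
  rw [Z, Z, Z, Fintype.sum_mul_sum, ← Fintype.sum_prod_type', ← (Fin.appendEquiv N₁ N₂).sum_comp]
  refine Finset.sum_congr rfl fun σ _ => ?_
  rw [← Real.exp_add, ← neg_add]
  simp [H, Fin.sum_univ_add, h₁₂, h₂₁]

section Disorder

/-- The logarithm of the partition function at inverse temperature `β` of the multigraph with
`n (i, j)` edges from `i` to `j`. -/
noncomputable def logZ (q N : ℕ) (β : ℝ) (n : Fin N × Fin N → ℕ) : ℝ :=
  Real.log (Z q N fun i j => β * n (i, j))

lemma integrable_logZ [NeZero q] (β : ℝ) (r : Fin N × Fin N → ℝ≥0) :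
    Integrable (logZ q N β) (poissonPi r) := by
  refine Integrable.mono' (g := fun n => N * Real.log q + |β| * ∑ e, (n e : ℝ)) ?_
    (measurable_of_countable _).aestronglyMeasurable (Eventually.of_forall fun n => ?_)
  · exact (integrable_const _).add
      ((integrable_finsetSum _ fun e _ => integrable_eval_poissonPi r e).const_mul _)
  · refine (abs_log_Z_le _).trans_eq ?_
    simp only [abs_mul, Nat.abs_cast, Fintype.sum_prod_type, Finset.mul_sum]

/-- The expectation of `logZ` when the edge multiplicities are independent Poisson variables with
rates `r`. -/
noncomputable def quenchedLogZ (q N : ℕ) (β : ℝ) (r : Fin N × Fin N → ℝ≥0) : ℝ :=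
  ∫ n, logZ q N β n ∂poissonPi r

lemma p_eq_quenchedLogZ [NeZero q] (β : ℝ) (c : ℝ≥0) :
    p q N β c = 1 / N * quenchedLogZ q N β fun _ => c / (2 * N) := by
  rw [quenchedLogZ, integral_countable (integrable_logZ β _), p, pmat, E, ← tsum_mul_left,
    ← (Equiv.curry (Fin N) (Fin N) ℕ).tsum_eq]
  refine tsum_congr fun n => ?_
  rw [poissonPi_real_singleton, Fintype.prod_prod_type, smul_eq_mul, mul_left_comm]
  simp [logZ]

lemma logZ_add_single (β : ℝ) (n : Fin N × Fin N → ℕ) (i j : Fin N) :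
    logZ q N β (n + Pi.single (i, j) 1) =
      Real.log (Z q N ((fun i j => β * n (i, j)) + Pi.single i (Pi.single j β))) := by
  rw [logZ]
  congr 2
  ext k l
  by_cases hk : k = i <;> by_cases hl : l = j <;> simp_all [mul_add]

theorem quenchedLogZ_le_of_posSemidef_sub [NeZero q] {β : ℝ} (hβ : 0 ≤ β)
    {r s : Fin N × Fin N → ℝ≥0}
    (hrs : (Matrix.of fun i j => (r (i, j) - s (i, j) : ℝ)).PosSemidef)
    (hsum : ∑ e, (r e : ℝ) = ∑ e, (s e : ℝ)) :
    quenchedLogZ q N β r ≤ quenchedLogZ q N β s := by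
  refine integral_poissonPi_le_of_weightedShift_le (integrable_logZ β r) (integrable_logZ β s)
    hsum fun n => sub_nonpos.1 ?_
  have sum_sub_eq_zero : ∑ i, ∑ j, (r (i, j) - s (i, j) : ℝ) = 0 := by
    rw [← Fintype.sum_prod_type', Finset.sum_sub_distrib, hsum, sub_self]
  calc weightedShift r (logZ q N β) n - weightedShift s (logZ q N β) n
      = ∑ i, ∑ j, (r (i, j) - s (i, j) : ℝ) * logZ q N β (n + Pi.single (i, j) 1) := by
        simp only [weightedShift, ← Finset.sum_sub_distrib, ← sub_mul, Fintype.sum_prod_type]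
    _ ≤ 0 := by
        simp only [logZ_add_single]
        exact sum_mul_log_Z_add_single_nonpos _ hrs sum_sub_eq_zero hβ

variable {N₁ N₂ : ℕ}

lemma logZ_eq_add_of_blocks_decoupled [NeZero q] (β : ℝ) (n : Fin (N₁ + N₂) × Fin (N₁ + N₂) → ℕ)
    (h₁₂ : ∀ i j, n (Fin.castAdd N₂ i, Fin.natAdd N₁ j) = 0)
    (h₂₁ : ∀ i j, n (Fin.natAdd N₁ i, Fin.castAdd N₂ j) = 0) :
    logZ q (N₁ + N₂) β n =
      logZ q N₁ β (fun e => n (e.map (Fin.castAdd N₂) (Fin.castAdd N₂))) +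
        logZ q N₂ β (fun e => n (e.map (Fin.natAdd N₁) (Fin.natAdd N₁))) := by
  rw [logZ, Z_eq_mul_of_blocks_decoupled _ (by simp [h₁₂]) (by simp [h₂₁])]
  exact Real.log_mul (Z_pos _).ne' (Z_pos _).ne'

lemma quenchedLogZ_eq_add_of_blocks_decoupled [NeZero q] (β : ℝ)
    (r : Fin (N₁ + N₂) × Fin (N₁ + N₂) → ℝ≥0)
    (h₁₂ : ∀ i j, r (Fin.castAdd N₂ i, Fin.natAdd N₁ j) = 0)
    (h₂₁ : ∀ i j, r (Fin.natAdd N₁ i, Fin.castAdd N₂ j) = 0) :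
    quenchedLogZ q (N₁ + N₂) β r =
      quenchedLogZ q N₁ β (fun e => r (e.map (Fin.castAdd N₂) (Fin.castAdd N₂))) +
        quenchedLogZ q N₂ β (fun e => r (e.map (Fin.natAdd N₁) (Fin.natAdd N₁))) := by
  have restrict₁ := measurePreserving_comp_poissonPi r
    ((Fin.castAdd_injective N₁ N₂).prodMap (Fin.castAdd_injective N₁ N₂))
  have restrict₂ := measurePreserving_comp_poissonPi r
    ((Fin.natAdd_injective N₂ N₁).prodMap (Fin.natAdd_injective N₂ N₁))
  rw [quenchedLogZ, quenchedLogZ, quenchedLogZ, ← restrict₁.map_eq, ← restrict₂.map_eq,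
    integral_map restrict₁.aemeasurable (measurable_of_countable _).aestronglyMeasurable,
    integral_map restrict₂.aemeasurable (measurable_of_countable _).aestronglyMeasurable]
  refine (integral_congr_ae ?_).trans
    (integral_add (restrict₁.integrable_comp_of_integrable (integrable_logZ β _))
      (restrict₂.integrable_comp_of_integrable (integrable_logZ β _)))
  filter_upwards [ae_poissonPi_eq_zero_of_rate_eq_zero r] with n hn
  exact logZ_eq_add_of_blocks_decoupled β n (fun i j => hn _ (h₁₂ i j)) fun i j => hn _ (h₂₁ i j)

/-- The edge rates of two non-interacting systems of `N₁` and `N₂` spins placed side by side: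
`c / (2 * N₁)` and `c / (2 * N₂)` inside the two blocks, and `0` between them. -/
noncomputable def decoupledRate (N₁ N₂ : ℕ) (c : ℝ≥0) (e : Fin (N₁ + N₂) × Fin (N₁ + N₂)) : ℝ≥0 :=
  Fin.append (fun _ => Fin.append (fun _ => c / (2 * N₁)) (fun _ => 0))
    (fun _ => Fin.append (fun _ => 0) (fun _ => c / (2 * N₂))) e.1 e.2

lemma decoupledRate_sub_eq_smul_vecMulVec (h₁ : 0 < N₁) (h₂ : 0 < N₂) (c : ℝ≥0) :
    let u : Fin (N₁ + N₂) → ℝ := Fin.append (fun _ => (N₁ : ℝ)⁻¹) fun _ => -(N₂ : ℝ)⁻¹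
    (Matrix.of fun i j => (decoupledRate N₁ N₂ c (i, j) - (c / (2 * (N₁ + N₂ : ℕ)) : ℝ≥0) : ℝ)) =
      (c * N₁ * N₂ / (2 * (N₁ + N₂)) : ℝ) • Matrix.vecMulVec u (star u) := by
  ext i j
  cases i using Fin.addCases <;> cases j using Fin.addCases <;>
  · simp only [decoupledRate, Matrix.of_apply, Matrix.smul_apply, Matrix.vecMulVec_apply,
      star_trivial, smul_eq_mul, Fin.append_left, Fin.append_right]
    push_cast
    field_simp
    ring

lemma sum_decoupledRate (h₁ : 0 < N₁) (h₂ : 0 < N₂) (c : ℝ≥0) :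
    ∑ e, (decoupledRate N₁ N₂ c e : ℝ) =
      ∑ _e : Fin (N₁ + N₂) × Fin (N₁ + N₂), ((c / (2 * (N₁ + N₂ : ℕ)) : ℝ≥0) : ℝ) := by
  simp only [decoupledRate, Fintype.sum_prod_type, Fin.sum_univ_add, Fin.append_left,
    Fin.append_right, Finset.sum_const, Finset.card_univ, Fintype.card_prod, Fintype.card_fin,
    nsmul_eq_mul]
  push_cast
  field_simp
  ring

theorem quenchedLogZ_superadditive [NeZero q] {β : ℝ} (hβ : 0 ≤ β) (c : ℝ≥0)
    (h₁ : 0 < N₁) (h₂ : 0 < N₂) :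
    quenchedLogZ q N₁ β (fun _ => c / (2 * N₁)) + quenchedLogZ q N₂ β (fun _ => c / (2 * N₂)) ≤
      quenchedLogZ q (N₁ + N₂) β fun _ => c / (2 * (N₁ + N₂ : ℕ)) := by
  calc quenchedLogZ q N₁ β (fun _ => c / (2 * N₁)) + quenchedLogZ q N₂ β (fun _ => c / (2 * N₂))
      = quenchedLogZ q (N₁ + N₂) β (decoupledRate N₁ N₂ c) := by
        rw [quenchedLogZ_eq_add_of_blocks_decoupled β _ (by simp [decoupledRate])
          (by simp [decoupledRate])]
        simp [decoupledRate]
    _ ≤ quenchedLogZ q (N₁ + N₂) β fun _ => c / (2 * (N₁ + N₂ : ℕ)) := by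
        refine quenchedLogZ_le_of_posSemidef_sub hβ ?_ (sum_decoupledRate h₁ h₂ c)
        rw [decoupledRate_sub_eq_smul_vecMulVec h₁ h₂]
        exact (Matrix.posSemidef_vecMulVec_self_star _).smul (by positivity)

end Disorder

end potts

/-- superadditivity of the quenched pressure. -/
theorem statement1 (q : ℕ) (hq : 2 ≤ q) (β c : ℝ) (hβ : 0 ≤ β) (hc : 0 ≤ c)
    (N₁ N₂ : ℕ) (h₁ : 0 < N₁) (h₂ : 0 < N₂) :
    potts.p q (N₁ + N₂) β c ≥
      ((N₁ : ℝ) / ((N₁ : ℝ) + N₂)) * potts.p q N₁ β c +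
        ((N₂ : ℝ) / ((N₁ : ℝ) + N₂)) * potts.p q N₂ β c := by
  have : NeZero q := ⟨by omega⟩
  lift c to ℝ≥0 using hc
  simp only [potts.p_eq_quenchedLogZ]
  calc _ = 1 / ((N₁ + N₂ : ℕ) : ℝ) *
        (potts.quenchedLogZ q N₁ β (fun _ => c / (2 * N₁)) +
          potts.quenchedLogZ q N₂ β (fun _ => c / (2 * N₂))) := by
        push_cast
        field_simp
    _ ≤ _ := by
        gcongr
        exact potts.quenchedLogZ_superadditive hβ c h₁ h₂
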